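/- arXiv:2406.11506 — 3 statements merged into one kernel-verified Lean document; each statement's English description precedes it below -/
import Mathlib

section
/- Let f : ℝⁿ × ℝᵐ → ℝⁿ be differentiable, P, Q symmetric positive definite n×n real matrices, R a symmetric positive definite m×m real matrix, and K ∈ ℝ^{m×n}. Let x, x^r ∈ ℝⁿ, u^r ∈ ℝᵐ, set δ := x − x^r, u := u^r + Kδ, and z(s) := (x^r + sδ, u^r + sKδ). Suppose that for every s ∈ [0,1], P(A(z(s)) + B(z(s))K) + (A(z(s)) + B(z(s))K)ᵀP ⪯ −(Q + KᵀRK). Then 2δᵀP(f(x,u) − f(x^r,u^r)) ≤ −δᵀ(Q + KᵀRK)δ. -/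
open Matrix

/-- The Jacobian matrix of `f : ℝⁿ × ℝᵐ → ℝⁿ` with respect to its first
(state) argument, evaluated at `z`. -/
noncomputable def jacAmat {n m : ℕ} (f : ((Fin n → ℝ) × (Fin m → ℝ)) → (Fin n → ℝ))
    (z : (Fin n → ℝ) × (Fin m → ℝ)) : Matrix (Fin n) (Fin n) ℝ :=
  LinearMap.toMatrix' (fderiv ℝ (fun x => f (x, z.2)) z.1 : (Fin n → ℝ) →ₗ[ℝ] (Fin n → ℝ))

/-- The Jacobian matrix of `f : ℝⁿ × ℝᵐ → ℝⁿ` with respect to its second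
(input) argument, evaluated at `z`. -/
noncomputable def jacBmat {n m : ℕ} (f : ((Fin n → ℝ) × (Fin m → ℝ)) → (Fin n → ℝ))
    (z : (Fin n → ℝ) × (Fin m → ℝ)) : Matrix (Fin n) (Fin m) ℝ :=
  LinearMap.toMatrix' (fderiv ℝ (fun u => f (z.1, u)) z.2 : (Fin m → ℝ) →ₗ[ℝ] (Fin n → ℝ))

/-- `M ⪯ N` for symmetric real matrices: `N - M` is positive semidefinite. -/
def matLE {n : ℕ} (M N : Matrix (Fin n) (Fin n) ℝ) : Prop := (N - M).PosSemidef

section MeanValue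

variable {E F : Type*} [NormedAddCommGroup E] [NormedSpace ℝ E]
  [NormedAddCommGroup F] [NormedSpace ℝ F]

theorem exists_clm_apply_sub_eq_clm_apply_fderiv (L : F →L[ℝ] ℝ) {f : E → F} {a v : E}
    (hf : ∀ s ∈ Set.Icc (0 : ℝ) 1, DifferentiableAt ℝ f (a + s • v)) :
    ∃ s ∈ Set.Icc (0 : ℝ) 1, L (f (a + v) - f a) = L (fderiv ℝ f (a + s • v) v) := by
  have hseg : segment ℝ a (a + v) = (fun s : ℝ => a + s • v) '' Set.Icc 0 1 := by
    rw [segment_eq_image', add_sub_cancel_left]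
  have hderiv : ∀ z ∈ segment ℝ a (a + v),
      HasFDerivWithinAt (L ∘ f) (L ∘L fderiv ℝ f z) (segment ℝ a (a + v)) z := by
    rw [hseg]
    rintro _ ⟨s, hs, rfl⟩
    exact (L.hasFDerivAt.comp _ (hf s hs).hasFDerivAt).hasFDerivWithinAt
  obtain ⟨z, hz, hslope⟩ := domain_mvt hderiv (convex_segment a (a + v))
    (left_mem_segment ℝ a (a + v)) (right_mem_segment ℝ a (a + v))
  obtain ⟨s, hs, rfl⟩ := hseg ▸ hz
  exact ⟨s, hs, by simpa using hslope⟩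

end MeanValue

section Jacobian

variable {n m : ℕ} {f : ((Fin n → ℝ) × (Fin m → ℝ)) → (Fin n → ℝ)}
  {z : (Fin n → ℝ) × (Fin m → ℝ)}

theorem jacAmat_mulVec (hf : DifferentiableAt ℝ f z) (v : Fin n → ℝ) :
    jacAmat f z *ᵥ v = fderiv ℝ f z (v, 0) := by
  have hpartial : HasFDerivAt (fun x => f (x, z.2)) (fderiv ℝ f z ∘L .inl ℝ _ _) z.1 :=
    HasFDerivAt.comp (g := f) z.1 hf.hasFDerivAt (hasFDerivAt_prodMk_left z.1 z.2)
  rw [jacAmat, hpartial.fderiv, LinearMap.toMatrix'_mulVec]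
  rfl

theorem jacBmat_mulVec (hf : DifferentiableAt ℝ f z) (w : Fin m → ℝ) :
    jacBmat f z *ᵥ w = fderiv ℝ f z (0, w) := by
  have hpartial : HasFDerivAt (fun u => f (z.1, u)) (fderiv ℝ f z ∘L .inr ℝ _ _) z.2 :=
    HasFDerivAt.comp (g := f) z.2 hf.hasFDerivAt (hasFDerivAt_prodMk_right z.1 z.2)
  rw [jacBmat, hpartial.fderiv, LinearMap.toMatrix'_mulVec]
  rfl

theorem jacAmat_add_jacBmat_mul_mulVec (hf : DifferentiableAt ℝ f z)
    (K : Matrix (Fin m) (Fin n) ℝ) (v : Fin n → ℝ) :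
    (jacAmat f z + jacBmat f z * K) *ᵥ v = fderiv ℝ f z (v, K *ᵥ v) := by
  rw [add_mulVec, ← mulVec_mulVec, jacAmat_mulVec hf, jacBmat_mulVec hf, ← map_add,
    Prod.mk_add_mk, add_zero, zero_add]

end Jacobian

theorem dotProduct_mul_add_transpose_mul_mulVec {ι α : Type*} [Fintype ι] [CommSemiring α]
    {P : Matrix ι ι α} (hP : P.IsSymm) (M : Matrix ι ι α) (v : ι → α) :
    v ⬝ᵥ (P * M + Mᵀ * P) *ᵥ v = 2 * (v ⬝ᵥ P *ᵥ M *ᵥ v) := by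
  have htranspose : v ⬝ᵥ (Mᵀ * P) *ᵥ v = v ⬝ᵥ (P * M) *ᵥ v := by
    rw [← dotProduct_transpose_mulVec, transpose_mul, transpose_transpose, hP.eq]
  rw [add_mulVec, dotProduct_add, htranspose, mulVec_mulVec, two_mul]

theorem matLE.dotProduct_mulVec_le {n : ℕ} {M N : Matrix (Fin n) (Fin n) ℝ} (h : matLE M N)
    (v : Fin n → ℝ) : v ⬝ᵥ M *ᵥ v ≤ v ⬝ᵥ N *ᵥ v := by
  have hnonneg := PosSemidef.dotProduct_mulVec_nonneg h v
  rwa [star_trivial, sub_mulVec, dotProduct_sub, sub_nonneg] at hnonneg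

theorem stmt4_general {n m : ℕ} (f : ((Fin n → ℝ) × (Fin m → ℝ)) → (Fin n → ℝ))
    (P W : Matrix (Fin n) (Fin n) ℝ) (hP : P.IsSymm)
    (K : Matrix (Fin m) (Fin n) ℝ) (x xr : Fin n → ℝ) (ur : Fin m → ℝ)
    (hf : ∀ s ∈ Set.Icc (0 : ℝ) 1,
      DifferentiableAt ℝ f (xr + s • (x - xr), ur + s • K *ᵥ (x - xr)))
    (hLMI : ∀ s ∈ Set.Icc (0 : ℝ) 1,
      matLE
        (P * (jacAmat f (xr + s • (x - xr), ur + s • K *ᵥ (x - xr)) +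
              jacBmat f (xr + s • (x - xr), ur + s • K *ᵥ (x - xr)) * K) +
         (jacAmat f (xr + s • (x - xr), ur + s • K *ᵥ (x - xr)) +
          jacBmat f (xr + s • (x - xr), ur + s • K *ᵥ (x - xr)) * K)ᵀ * P)
        (-W)) :
    2 * ((x - xr) ⬝ᵥ P *ᵥ (f (x, ur + K *ᵥ (x - xr)) - f (xr, ur))) ≤
      -((x - xr) ⬝ᵥ W *ᵥ (x - xr)) := by
  obtain ⟨δ, rfl⟩ : ∃ δ, x = xr + δ := ⟨x - xr, (add_sub_cancel xr x).symm⟩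
  rw [add_sub_cancel_left] at hf hLMI ⊢
  -- The derivative of `f` need not be integrable along the segment, so the mean value theorem
  -- for `s ↦ δᵀ P f(z(s))` replaces the integral of the closed-loop Jacobian.
  obtain ⟨s, hs, hmean⟩ : ∃ s ∈ Set.Icc (0 : ℝ) 1,
      δ ⬝ᵥ P *ᵥ (f (xr + δ, ur + K *ᵥ δ) - f (xr, ur)) =
        δ ⬝ᵥ P *ᵥ fderiv ℝ f (xr + s • δ, ur + s • K *ᵥ δ) (δ, K *ᵥ δ) := by
    simpa [toLinearMap₂'_apply'] using exists_clm_apply_sub_eq_clm_apply_fderiv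
      (toLinearMap₂' ℝ P δ).toContinuousLinearMap (a := (xr, ur)) (v := (δ, K *ᵥ δ)) hf
  have hquad := (hLMI s hs).dotProduct_mulVec_le δ
  rwa [dotProduct_mul_add_transpose_mul_mulVec hP, jacAmat_add_jacBmat_mul_mulVec (hf s hs),
    ← hmean, neg_mulVec, dotProduct_neg] at hquad

/-- if along the segment `z(s) = (x^r + s δ, u^r + s K δ)` one has
`P(A + BK) + (A + BK)ᵀP ⪯ -(Q + KᵀRK)`, then
`2 δᵀ P (f(x,u) - f(x^r,u^r)) ≤ -δᵀ (Q + KᵀRK) δ` with `u = u^r + K δ`. -/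
theorem stmt4 {n m : ℕ} (f : ((Fin n → ℝ) × (Fin m → ℝ)) → (Fin n → ℝ))
    (hf : Differentiable ℝ f)
    (P Q : Matrix (Fin n) (Fin n) ℝ) (hP : P.PosDef) (hQ : Q.PosDef)
    (R : Matrix (Fin m) (Fin m) ℝ) (hR : R.PosDef)
    (K : Matrix (Fin m) (Fin n) ℝ) (x xr : Fin n → ℝ) (ur : Fin m → ℝ)
    (hLMI : ∀ s ∈ Set.Icc (0 : ℝ) 1,
      matLE
        (P * (jacAmat f (xr + s • (x - xr), ur + s • K.mulVec (x - xr)) +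
              jacBmat f (xr + s • (x - xr), ur + s • K.mulVec (x - xr)) * K) +
         (jacAmat f (xr + s • (x - xr), ur + s • K.mulVec (x - xr)) +
          jacBmat f (xr + s • (x - xr), ur + s • K.mulVec (x - xr)) * K)ᵀ * P)
        (-(Q + Kᵀ * R * K))) :
    2 * ((x - xr) ⬝ᵥ P.mulVec (f (x, ur + K.mulVec (x - xr)) - f (xr, ur))) ≤
      -((x - xr) ⬝ᵥ (Q + Kᵀ * R * K).mulVec (x - xr)) :=
  stmt4_general f P (Q + Kᵀ * R * K) (isHermitian_iff_isSymm.mp hP.isHermitian) K x xr ur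
    (fun _ _ => hf _) hLMI
end

section
/- Let f : ℝⁿ × ℝᵐ → ℝⁿ be continuously differentiable, P, Q symmetric positive definite n×n real matrices, R symmetric positive definite m×m, K ∈ ℝ^{m×n}, and I ⊆ ℝ an interval. Let x^r : I → ℝⁿ be differentiable and u^r : I → ℝᵐ be such that (d/dt)x^r(t) = f(x^r(t), u^r(t)) for all t ∈ I, and let x : I → ℝⁿ be differentiable with (d/dt)x(t) = f(x(t), u^r(t) + K(x(t) − x^r(t))) for all t ∈ I. Set δ(t) := x(t) − x^r(t), and suppose that for every t ∈ I and every s ∈ [0,1], at z := (x^r(t) + sδ(t), u^r(t) + sKδ(t)) one has P(A(z) + B(z)K) + (A(z) + B(z)K)ᵀP ⪯ −(Q + KᵀRK). Then V(t) := δ(t)ᵀPδ(t) is differentiable on I and satisfies V'(t) ≤ −δ(t)ᵀ(Q + KᵀRK)δ(t) for all t ∈ I. -/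
open Matrix

/-!
Fix a time `t` and put `δ = x - x^r`. The derivative of `δᵀPδ` is
`2 δᵀP (f(x, u^r + Kδ) - f(x^r, u^r))`. Since this is a scalar, the mean value theorem applies along
the segment from `(x^r, u^r)` in the direction `(δ, Kδ)`, and no integration over the segment is
needed: the derivative equals `2 δᵀP (A(z) + B(z)K) δ` for a single point `z` of the segment. For
symmetric `P` this is the value at `δ` of the quadratic form of the left-hand side of the matrix
inequality at `z`.
-/

section SymmetricMatrix

variable {ι α : Type*} [Fintype ι] [CommSemiring α] {P : Matrix ι ι α}

theorem dotProduct_mulVec_comm_of_isSymm (hP : P.IsSymm) (v w : ι → α) :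
    v ⬝ᵥ P *ᵥ w = w ⬝ᵥ P *ᵥ v := by
  rw [← dotProduct_transpose_mulVec, hP.eq]

theorem dotProduct_mul_add_transpose_mul_mulVec_self (hP : P.IsSymm) (M : Matrix ι ι α)
    (v : ι → α) :
    v ⬝ᵥ (P * M + Mᵀ * P) *ᵥ v = 2 * (v ⬝ᵥ P *ᵥ M *ᵥ v) := by
  have transpose_term : v ⬝ᵥ (Mᵀ * P) *ᵥ v = v ⬝ᵥ (P * M) *ᵥ v := by
    rw [← dotProduct_transpose_mulVec, transpose_mul, transpose_transpose, hP.eq]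
  rw [add_mulVec, dotProduct_add, transpose_term, mulVec_mulVec, two_mul]

end SymmetricMatrix

section BilinearForm

variable {ι 𝕜 : Type*} [Fintype ι] [NontriviallyNormedField 𝕜] [CompleteSpace 𝕜]

/-- The bilinear form `(v, w) ↦ vᵀ P w` as a continuous bilinear map, so that the calculus of
such maps applies to it. -/
noncomputable def dotProductMulVecCLM (P : Matrix ι ι 𝕜) :
    (ι → 𝕜) →L[𝕜] (ι → 𝕜) →L[𝕜] 𝕜 :=
  ((dotProductBilin 𝕜 𝕜).compl₂ P.mulVecLin).toContinuousBilinearMap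

theorem dotProductMulVecCLM_apply (P : Matrix ι ι 𝕜) (v w : ι → 𝕜) :
    dotProductMulVecCLM P v w = v ⬝ᵥ P *ᵥ w :=
  rfl

theorem hasDerivWithinAt_dotProduct_mulVec_self {P : Matrix ι ι 𝕜} (hP : P.IsSymm)
    {y : 𝕜 → ι → 𝕜} {y' : ι → 𝕜} {S : Set 𝕜} {t : 𝕜} (hy : HasDerivWithinAt y y' S t) :
    HasDerivWithinAt (fun τ => y τ ⬝ᵥ P *ᵥ y τ) (2 * (y t ⬝ᵥ P *ᵥ y')) S t := by
  have product_rule := (dotProductMulVecCLM P).hasDerivWithinAt_of_bilinear hy hy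
  simpa only [dotProductMulVecCLM_apply, dotProduct_mulVec_comm_of_isSymm hP y' (y t),
    ← two_mul] using product_rule

end BilinearForm

theorem exists_mem_Icc_apply_sub_eq_apply_fderiv {E F : Type*} [NormedAddCommGroup E]
    [NormedSpace ℝ E] [NormedAddCommGroup F] [NormedSpace ℝ F] (φ : F →L[ℝ] ℝ) {f : E → F} {a v : E}
    (hf : ∀ s ∈ Set.Icc (0 : ℝ) 1, DifferentiableAt ℝ f (a + s • v)) :
    ∃ s ∈ Set.Icc (0 : ℝ) 1, φ (f (a + v) - f a) = φ (fderiv ℝ f (a + s • v) v) := by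
  have segment_eq : segment ℝ a (a + v) = (fun s : ℝ => a + s • v) '' Set.Icc 0 1 := by
    rw [segment_eq_image', add_sub_cancel_left]
  have hφf : ∀ z ∈ segment ℝ a (a + v),
      HasFDerivWithinAt (φ ∘ f) (φ ∘L fderiv ℝ f z) (segment ℝ a (a + v)) z := by
    rw [segment_eq]
    rintro _ ⟨s, hs, rfl⟩
    exact (φ.hasFDerivAt.comp _ (hf s hs).hasFDerivAt).hasFDerivWithinAt
  obtain ⟨z, hz, mean_value⟩ := domain_mvt hφf (convex_segment a (a + v))
    (left_mem_segment ℝ a (a + v)) (right_mem_segment ℝ a (a + v))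
  rw [segment_eq] at hz
  obtain ⟨s, hs, rfl⟩ := hz
  refine ⟨s, hs, ?_⟩
  simpa only [Function.comp_apply, map_sub, add_sub_cancel_left,
    ContinuousLinearMap.comp_apply] using mean_value

section ClosedLoop

variable {n m : ℕ}

/-- The closed-loop Jacobian `A(z) + B(z)K`: the derivative of `f` at `z` in the state direction `v`
when the feedback with gain `K` moves the input by `Kv`. -/
noncomputable def closedLoopJac (f : (Fin n → ℝ) × (Fin m → ℝ) → Fin n → ℝ)
    (K : Matrix (Fin m) (Fin n) ℝ) (z : (Fin n → ℝ) × (Fin m → ℝ)) : Matrix (Fin n) (Fin n) ℝ :=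
  jacAmat f z + jacBmat f z * K

variable {f : (Fin n → ℝ) × (Fin m → ℝ) → Fin n → ℝ} {K : Matrix (Fin m) (Fin n) ℝ}
  {P W : Matrix (Fin n) (Fin n) ℝ}

theorem fderiv_apply_eq_jacAmat_mulVec_add_jacBmat_mulVec {z : (Fin n → ℝ) × (Fin m → ℝ)}
    (hf : DifferentiableAt ℝ f z) (v : Fin n → ℝ) (w : Fin m → ℝ) :
    fderiv ℝ f z (v, w) = jacAmat f z *ᵥ v + jacBmat f z *ᵥ w := by
  have state_partial : HasFDerivAt (fun x => f (x, z.2))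
      (fderiv ℝ f z ∘L .inl ℝ (Fin n → ℝ) (Fin m → ℝ)) z.1 :=
    HasFDerivAt.comp z.1 (g := f) hf.hasFDerivAt (hasFDerivAt_prodMk_left z.1 z.2)
  have input_partial : HasFDerivAt (fun u => f (z.1, u))
      (fderiv ℝ f z ∘L .inr ℝ (Fin n → ℝ) (Fin m → ℝ)) z.2 :=
    HasFDerivAt.comp z.2 (g := f) hf.hasFDerivAt (hasFDerivAt_prodMk_right z.1 z.2)
  rw [jacAmat, jacBmat, state_partial.fderiv, input_partial.fderiv,
    LinearMap.toMatrix'_mulVec, LinearMap.toMatrix'_mulVec]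
  simp [← map_add]

theorem fderiv_apply_mulVec_eq_closedLoopJac_mulVec {z : (Fin n → ℝ) × (Fin m → ℝ)}
    (hf : DifferentiableAt ℝ f z) (v : Fin n → ℝ) :
    fderiv ℝ f z (v, K *ᵥ v) = closedLoopJac f K z *ᵥ v := by
  rw [fderiv_apply_eq_jacAmat_mulVec_add_jacBmat_mulVec hf, closedLoopJac, add_mulVec,
    mulVec_mulVec]

theorem two_mul_dotProduct_mulVec_sub_le_of_matLE (hP : P.IsSymm) {ξ δ : Fin n → ℝ}
    {η : Fin m → ℝ}
    (hf : ∀ s ∈ Set.Icc (0 : ℝ) 1, DifferentiableAt ℝ f (ξ + s • δ, η + s • K *ᵥ δ))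
    (hLMI : ∀ s ∈ Set.Icc (0 : ℝ) 1,
      matLE (P * closedLoopJac f K (ξ + s • δ, η + s • K *ᵥ δ) +
        (closedLoopJac f K (ξ + s • δ, η + s • K *ᵥ δ))ᵀ * P) (-W)) :
    2 * (δ ⬝ᵥ P *ᵥ (f (ξ + δ, η + K *ᵥ δ) - f (ξ, η))) ≤ -(δ ⬝ᵥ W *ᵥ δ) := by
  obtain ⟨s, hs, mean_value⟩ := exists_mem_Icc_apply_sub_eq_apply_fderiv (dotProductMulVecCLM P δ)
    (f := f) (a := (ξ, η)) (v := (δ, K *ᵥ δ)) hf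
  simp only [dotProductMulVecCLM_apply, Prod.smul_mk, Prod.mk_add_mk] at mean_value
  set J := closedLoopJac f K (ξ + s • δ, η + s • K *ᵥ δ)
  calc 2 * (δ ⬝ᵥ P *ᵥ (f (ξ + δ, η + K *ᵥ δ) - f (ξ, η)))
      = 2 * (δ ⬝ᵥ P *ᵥ J *ᵥ δ) := by
        rw [mean_value, fderiv_apply_mulVec_eq_closedLoopJac_mulVec (hf s hs)]
    _ = δ ⬝ᵥ (P * J + Jᵀ * P) *ᵥ δ := (dotProduct_mul_add_transpose_mul_mulVec_self hP J δ).symm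
    _ ≤ δ ⬝ᵥ (-W) *ᵥ δ := (hLMI s hs).dotProduct_mulVec_le δ
    _ = -(δ ⬝ᵥ W *ᵥ δ) := by rw [neg_mulVec, dotProduct_neg]

/-- `W` stands for the stage cost matrix `Q + KᵀRK`. Derivatives are taken within a set `S` of
times, so that they may be one-sided at an endpoint of the interval of the trajectories. -/
theorem stmt8_general (hP : P.IsSymm) {xr x : ℝ → Fin n → ℝ} {ur : ℝ → Fin m → ℝ} {S : Set ℝ}
    {t : ℝ}
    (hf : ∀ s ∈ Set.Icc (0 : ℝ) 1, DifferentiableAt ℝ f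
      (xr t + s • (x t - xr t), ur t + s • K *ᵥ (x t - xr t)))
    (hxr : HasDerivWithinAt xr (f (xr t, ur t)) S t)
    (hx : HasDerivWithinAt x (f (x t, ur t + K *ᵥ (x t - xr t))) S t)
    (hLMI : ∀ s ∈ Set.Icc (0 : ℝ) 1,
      matLE
        (P * closedLoopJac f K (xr t + s • (x t - xr t), ur t + s • K *ᵥ (x t - xr t)) +
          (closedLoopJac f K (xr t + s • (x t - xr t), ur t + s • K *ᵥ (x t - xr t)))ᵀ * P)
        (-W)) :
    ∃ d : ℝ,
      HasDerivWithinAt (fun τ => (x τ - xr τ) ⬝ᵥ P *ᵥ (x τ - xr τ)) d S t ∧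
      d ≤ -((x t - xr t) ⬝ᵥ W *ᵥ (x t - xr t)) := by
  refine ⟨_, hasDerivWithinAt_dotProduct_mulVec_self hP (hx.sub hxr), ?_⟩
  simpa only [Pi.sub_apply, add_sub_cancel] using
    two_mul_dotProduct_mulVec_sub_le_of_matLE hP hf hLMI

end ClosedLoop

/-- along the closed-loop system under the terminal feedback law,
the incremental Lyapunov function `V(t) = δ(t)ᵀ P δ(t)` (with `δ = x - x^r`) is
differentiable on the interval `I` and satisfies
`V'(t) ≤ -δ(t)ᵀ (Q + KᵀRK) δ(t)`, provided the LMI holds along the segments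
`z = (x^r(t) + s δ(t), u^r(t) + s K δ(t))`, `s ∈ [0,1]`. -/
theorem stmt8 {n m : ℕ} (f : ((Fin n → ℝ) × (Fin m → ℝ)) → (Fin n → ℝ))
    (hf : ContDiff ℝ 1 f)
    (P Q : Matrix (Fin n) (Fin n) ℝ) (hP : P.PosDef) (hQ : Q.PosDef)
    (R : Matrix (Fin m) (Fin m) ℝ) (hR : R.PosDef)
    (K : Matrix (Fin m) (Fin n) ℝ)
    (I : Set ℝ) (hI : I.OrdConnected)
    (xr x : ℝ → Fin n → ℝ) (ur : ℝ → Fin m → ℝ)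
    (hxr : ∀ t ∈ I, HasDerivAt xr (f (xr t, ur t)) t)
    (hx : ∀ t ∈ I, HasDerivAt x (f (x t, ur t + K.mulVec (x t - xr t))) t)
    (hLMI : ∀ t ∈ I, ∀ s ∈ Set.Icc (0 : ℝ) 1,
      matLE
        (P * (jacAmat f (xr t + s • (x t - xr t), ur t + s • K.mulVec (x t - xr t)) +
              jacBmat f (xr t + s • (x t - xr t), ur t + s • K.mulVec (x t - xr t)) * K) +
         (jacAmat f (xr t + s • (x t - xr t), ur t + s • K.mulVec (x t - xr t)) +
          jacBmat f (xr t + s • (x t - xr t), ur t + s • K.mulVec (x t - xr t)) * K)ᵀ * P)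
        (-(Q + Kᵀ * R * K))) :
    ∀ t ∈ I, ∃ d : ℝ,
      HasDerivAt (fun τ => (x τ - xr τ) ⬝ᵥ P.mulVec (x τ - xr τ)) d t ∧
      d ≤ -((x t - xr t) ⬝ᵥ (Q + Kᵀ * R * K).mulVec (x t - xr t)) := by
  intro t ht
  simpa only [hasDerivWithinAt_univ] using stmt8_general (isHermitian_iff_isSymm.1 hP.isHermitian)
    (fun _ _ => hf.differentiable one_ne_zero _) (hxr t ht).hasDerivWithinAt
    (hx t ht).hasDerivWithinAt (hLMI t ht) (S := Set.univ)
end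

section
/- Theorem 2 (shift-and-hold candidate, recursive feasibility of the planning MPC). Let f : ℝⁿ × ℝᵐ → ℝⁿ be continuous, let 0 < Tˢ < T, and let Z ⊆ ℝⁿ × ℝᵐ be any set. Let x : [0,T] → ℝⁿ be differentiable and u : [0,T] → ℝᵐ be continuous with (d/dτ)x(τ) = f(x(τ), u(τ)) for all τ ∈ [0,T], (x(τ), u(τ)) ∈ Z for all τ ∈ [0,T], and f(x(T), u(T)) = 0. Define x̃(τ) := x(min(τ + Tˢ, T)) and ũ(τ) := u(min(τ + Tˢ, T)) for τ ∈ [0,T]. Then ũ is continuous, x̃ is differentiable on [0,T] with (d/dτ)x̃(τ) = f(x̃(τ), ũ(τ)) for all τ ∈ [0,T], (x̃(τ), ũ(τ)) ∈ Z for all τ ∈ [0,T], and f(x̃(T), ũ(T)) = 0. -/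
open Matrix

/- The candidate arises in two moves. Holding the terminal value extends a trajectory past its
horizon: the extended curve solves the dynamics on either side of the gluing time, and there the two
one-sided derivatives agree because both vanish. Since the dynamics are autonomous, the extended
trajectory may then be shifted in time and cut back to the original horizon. -/

section IntegralCurve

open Set

variable {E : Type*} [NormedAddCommGroup E] [NormedSpace ℝ E] {γ : ℝ → E} {v : ℝ → E → E}

lemma isIntegralCurveOn_union {s t : Set ℝ} (hs : IsIntegralCurveOn γ v s)
    (ht : IsIntegralCurveOn γ v t) (hs_closed : IsClosed s) (ht_closed : IsClosed t) :
    IsIntegralCurveOn γ v (s ∪ t) := by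
  -- At a point outside a closed set, every vector is a derivative within that set.
  have extend {r : Set ℝ} (hr : IsIntegralCurveOn γ v r) (hr_closed : IsClosed r) (τ : ℝ) :
      HasDerivWithinAt γ (v τ (γ τ)) r τ := by
    by_cases hτ : τ ∈ r
    · exact hr τ hτ
    · exact HasFDerivWithinAt.of_notMem_closure (by rwa [hr_closed.closure_eq])
  exact fun τ _ => (extend hs hs_closed τ).union (extend ht ht_closed τ)

lemma isIntegralCurveOn_comp_min {a b : ℝ} (hγ : IsIntegralCurveOn γ v (Icc a b))
    (hv : v b (γ b) = 0) :
    IsIntegralCurveOn (fun τ => γ (min τ b)) (fun τ => v (min τ b)) (Ici a) := by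
  have moving : IsIntegralCurveOn (fun τ => γ (min τ b)) (fun τ => v (min τ b)) (Icc a b) := by
    intro τ hτ
    simp only [min_eq_left hτ.2]
    exact (hγ τ hτ).congr_of_mem (fun σ hσ => congrArg γ (min_eq_left hσ.2)) hτ
  have held : IsIntegralCurveOn (fun τ => γ (min τ b)) (fun τ => v (min τ b)) (Ici b) := by
    intro τ hτ
    simp only [min_eq_right (mem_Ici.1 hτ), hv]
    exact (hasDerivWithinAt_const τ _ (γ b)).congr_of_mem
      (fun σ hσ => congrArg γ (min_eq_right hσ)) hτ
  exact (isIntegralCurveOn_union moving held isClosed_Icc isClosed_Ici).mono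
    Ici_subset_Icc_union_Ici

end IntegralCurve

section Feasible

open Set
open scoped Pointwise

variable {E U : Type*} [NormedAddCommGroup E] [NormedSpace ℝ E] [TopologicalSpace U]

/-- Feasibility of a state trajectory `x` with input `u` for the planning problem on the horizon
`[a, b]`: the input is continuous, the dynamics `ẋ = f(x, u)` hold with one-sided derivatives at the
end points, the constraint set `Z` is respected, and the terminal pair is a steady state. The values
of `x` and `u` outside `[a, b]` are irrelevant. -/
structure IsFeasible (f : E × U → E) (Z : Set (E × U)) (a b : ℝ) (x : ℝ → E) (u : ℝ → U) :
    Prop where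
  continuousOn_input : ContinuousOn u (Icc a b)
  isIntegralCurveOn : IsIntegralCurveOn x (fun τ y => f (y, u τ)) (Icc a b)
  mem_constraint : ∀ τ ∈ Icc a b, (x τ, u τ) ∈ Z
  steady_terminal : f (x b, u b) = 0

namespace IsFeasible

variable {f : E × U → E} {Z : Set (E × U)} {a b c : ℝ} {x : ℝ → E} {u : ℝ → U}

lemma mono_left (h : IsFeasible f Z a b x u) (hac : a ≤ c) : IsFeasible f Z c b x u where
  continuousOn_input := h.continuousOn_input.mono (Icc_subset_Icc_left hac)
  isIntegralCurveOn := h.isIntegralCurveOn.mono (Icc_subset_Icc_left hac)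
  mem_constraint τ hτ := h.mem_constraint τ (Icc_subset_Icc_left hac hτ)
  steady_terminal := h.steady_terminal

lemma comp_add_const (h : IsFeasible f Z a b x u) (s : ℝ) :
    IsFeasible f Z (a - s) (b - s) (fun τ => x (τ + s)) (fun τ => u (τ + s)) := by
  have hmaps : MapsTo (· + s) (Icc (a - s) (b - s)) (Icc a b) :=
    fun _ hτ => ⟨sub_le_iff_le_add.1 hτ.1, le_sub_iff_add_le.1 hτ.2⟩
  have hsubset : Icc (a - s) (b - s) ⊆ -s +ᵥ Icc a b :=
    fun τ hτ => ⟨τ + s, hmaps hτ, neg_add_eq_of_eq_add (add_comm τ s)⟩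
  exact {
    continuousOn_input := h.continuousOn_input.comp (by fun_prop) hmaps
    isIntegralCurveOn := (h.isIntegralCurveOn.comp_add s).mono hsubset
    mem_constraint := fun τ hτ => h.mem_constraint _ (hmaps hτ)
    steady_terminal := by simpa only [sub_add_cancel] using h.steady_terminal }

lemma comp_min (h : IsFeasible f Z a b x u) (hab : a ≤ b) (hbc : b ≤ c) :
    IsFeasible f Z a c (fun τ => x (min τ b)) (fun τ => u (min τ b)) := by
  have hmaps : MapsTo (min · b) (Icc a c) (Icc a b) :=
    fun _ hτ => ⟨le_min hτ.1 hab, min_le_right _ _⟩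
  exact {
    continuousOn_input := h.continuousOn_input.comp (by fun_prop) hmaps
    isIntegralCurveOn :=
      (isIntegralCurveOn_comp_min h.isIntegralCurveOn h.steady_terminal).mono Icc_subset_Ici_self
    mem_constraint := fun τ hτ => h.mem_constraint _ (hmaps hτ)
    steady_terminal := by simpa only [min_eq_right hbc] using h.steady_terminal }

end IsFeasible

theorem stmt11_general {f : E × U → E} {Z : Set (E × U)} {a b s : ℝ} {x : ℝ → E} {u : ℝ → U}
    (h : IsFeasible f Z a b x u) (hab : a ≤ b) (hs : 0 ≤ s) :
    IsFeasible f Z a b (fun τ => x (min (τ + s) b)) (fun τ => u (min (τ + s) b)) := by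
  have held := h.comp_min hab (le_add_of_nonneg_right hs : b ≤ b + s)
  have shifted := held.comp_add_const s
  rw [add_sub_cancel_right] at shifted
  exact shifted.mono_left (sub_le_self a hs)

end Feasible

/-- Theorem 2 core (shift-and-hold candidate): if `(x, u)`
satisfies the dynamics `ẋ = f(x, u)` on `[0, T]`, stays in `Z`, and ends at a
steady state (`f(x(T), u(T)) = 0`), then the candidate
`x̃(τ) = x(min(τ + Tˢ, T))`, `ũ(τ) = u(min(τ + Tˢ, T))` again satisfies the
dynamics on `[0, T]`, stays in `Z`, and ends at a steady state, with `ũ`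
continuous. -/
theorem stmt11 {n m : ℕ} (f : ((Fin n → ℝ) × (Fin m → ℝ)) → (Fin n → ℝ))
    (hf : Continuous f) (Ts T : ℝ) (hTs : 0 < Ts) (hT : Ts < T)
    (Z : Set ((Fin n → ℝ) × (Fin m → ℝ)))
    (x : ℝ → Fin n → ℝ) (u : ℝ → Fin m → ℝ)
    (hu : ContinuousOn u (Set.Icc 0 T))
    (hx : ∀ τ ∈ Set.Icc (0 : ℝ) T,
      HasDerivWithinAt x (f (x τ, u τ)) (Set.Icc 0 T) τ)
    (hZ : ∀ τ ∈ Set.Icc (0 : ℝ) T, (x τ, u τ) ∈ Z)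
    (hterm : f (x T, u T) = 0) :
    ContinuousOn (fun τ => u (min (τ + Ts) T)) (Set.Icc 0 T) ∧
    (∀ τ ∈ Set.Icc (0 : ℝ) T,
      HasDerivWithinAt (fun σ => x (min (σ + Ts) T))
        (f (x (min (τ + Ts) T), u (min (τ + Ts) T))) (Set.Icc 0 T) τ) ∧
    (∀ τ ∈ Set.Icc (0 : ℝ) T, (x (min (τ + Ts) T), u (min (τ + Ts) T)) ∈ Z) ∧
    f (x (min (T + Ts) T), u (min (T + Ts) T)) = 0 := by
  obtain ⟨hu', hx', hZ', hterm'⟩ :=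
    stmt11_general (IsFeasible.mk hu hx hZ hterm) (hTs.trans hT).le hTs.le
  exact ⟨hu', hx', hZ', hterm'⟩
end
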